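/- arXiv:2109.01221 — 4 statements merged into one kernel-verified Lean document; each statement's English description precedes it below -/
import Mathlib

section
/- Let X = {x_1, ..., x_n} be a nonempty finite set of n distinct integers, each greater than 1, and let D = {1} ∪ X. Then diam(D) = 2 if n = 1, diam(D) = 3 if n = 2, and diam(D) = 4 if n > 2. -/
/-! Lower bounds: in a tree, a vertex of degree at least two has a neighbour one step further away
from any prescribed vertex. Hence two distinct non-leaves `a`, `b` force the diameter to be at least
`dist a b + 2` (`SignedTree.dist_add_two_le_diam`). A vertex of signed degree greater than `1` is a
non-leaf, so `n ≥ 1`, `n ≥ 2`, `n ≥ 3` elements of `X` force diameter at least `2`, `3`, `4`: for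
`n ≥ 3` three non-leaves cannot be pairwise adjacent in a tree.

Upper bounds: put `m = max X`, and give every edge the sign `+`. Take a root with children
`0, …, m - 1`, where child `i` has `i` leaves attached if `i + 1 ∈ X` and `i + 1 ≠ m`, and is a leaf
otherwise. The root has degree `m`, the children realize `1` and the other elements of `X`, and
the depth is at most `2`. If `X` has two elements only one child has descendants, which lowers the
diameter to `3`; if `X` has one element the tree is a star, of diameter `2`. -/

/-- A signed tree: a finite tree (on vertex type `Fin n`) together with an
assignment of a sign to each possible edge (`true` = positive, `false` = negative). -/
structure SignedTree where
  n : ℕ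
  G : SimpleGraph (Fin n)
  adjDec : DecidableRel G.Adj
  isTree : G.IsTree
  sgn : Sym2 (Fin n) → Bool

namespace SignedTree

/-- The (unsigned) degree of a vertex in the underlying tree. -/
def deg (T : SignedTree) (v : Fin T.n) : ℕ :=
  letI := T.adjDec
  T.G.degree v

/-- The signed degree of a vertex: the number of positive edges incident to it
minus the number of negative edges incident to it. -/
def sdeg (T : SignedTree) (v : Fin T.n) : ℤ :=
  letI := T.adjDec
  ((((T.G.neighborFinset v).filter fun w => T.sgn s(v, w) = true).card : ℤ)) -
  ((((T.G.neighborFinset v).filter fun w => T.sgn s(v, w) = false).card : ℤ))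

/-- The signed tree `T` realizes the set `D` if `D` is exactly the set of signed
degrees of the vertices of `T`. -/
def Realizes (T : SignedTree) (D : Set ℤ) : Prop :=
  D = Set.range T.sdeg

end SignedTree

/-- `diamOfSet D` is the minimum diameter of the underlying tree over all
signed trees realizing `D`. -/
noncomputable def diamOfSet (D : Set ℤ) : ℕ :=
  sInf {k : ℕ | ∃ T : SignedTree, T.Realizes D ∧ T.G.diam = k}

/-- `orderOfSet D` is the minimum number of vertices of the underlying tree over
all signed trees realizing `D`. -/
noncomputable def orderOfSet (D : Set ℤ) : ℕ :=
  sInf {k : ℕ | ∃ T : SignedTree, T.Realizes D ∧ T.n = k}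

open SimpleGraph

/-! ### Lower bounds on the diameter -/

/-- If two neighbours of `a` were closer to `b` than `a`, they would start two distinct geodesics
from `a` to `b`, contradicting uniqueness of paths in a tree. -/
lemma SimpleGraph.IsTree.exists_adj_dist_succ {V : Type*} {G : SimpleGraph V} (hG : G.IsTree)
    {a w₁ w₂ : V} (h₁ : G.Adj a w₁) (h₂ : G.Adj a w₂) (hne : w₁ ≠ w₂) (b : V) :
    ∃ w, G.Adj a w ∧ G.dist w b = G.dist a b + 1 := by
  by_contra! hcon
  have key : ∀ w, G.Adj a w → G.dist a b = G.dist w b + 1 := by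
    intro w hw
    have h := hG.dist_eq_dist_add_one_of_adj b hw
    have h' := hcon w hw
    rw [G.dist_comm (u := b) (v := a), G.dist_comm (u := b) (v := w)] at h
    omega
  obtain ⟨p₁, hp₁⟩ := hG.connected.exists_walk_length_eq_dist w₁ b
  obtain ⟨p₂, hp₂⟩ := hG.connected.exists_walk_length_eq_dist w₂ b
  have q₁ : (Walk.cons h₁ p₁).IsPath :=
    Walk.isPath_of_length_eq_dist _ (by rw [Walk.length_cons, hp₁, key w₁ h₁])
  have q₂ : (Walk.cons h₂ p₂).IsPath :=
    Walk.isPath_of_length_eq_dist _ (by rw [Walk.length_cons, hp₂, key w₂ h₂])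
  have heq := (hG.existsUnique_path a b).unique q₁ q₂
  apply hne
  have := congrArg Walk.snd heq
  simpa using this

namespace SignedTree

lemma exists_adj_ne_of_one_lt_sdeg (T : SignedTree) {v : Fin T.n} (h : 1 < T.sdeg v) :
    ∃ w₁ w₂, T.G.Adj v w₁ ∧ T.G.Adj v w₂ ∧ w₁ ≠ w₂ := by
  let := T.adjDec
  have h1 : T.sdeg v ≤ ((T.G.neighborFinset v).card : ℤ) := by
    have := Finset.card_filter_le (T.G.neighborFinset v) (fun w => T.sgn s(v, w) = true)
    unfold sdeg
    omega
  have h2 : 1 < (T.G.neighborFinset v).card := by omega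
  obtain ⟨a, ha, b, hb, hab⟩ := Finset.one_lt_card.1 h2
  exact ⟨a, b, by simpa using ha, by simpa using hb, hab⟩

lemma dist_le_diam (T : SignedTree) (a b : Fin T.n) : T.G.dist a b ≤ T.G.diam := by
  have : Nonempty (Fin T.n) := ⟨a⟩
  exact SimpleGraph.dist_le_diam (connected_iff_ediam_ne_top.1 T.isTree.connected)

lemma two_le_diam (T : SignedTree) {a : Fin T.n} (ha : 1 < T.sdeg a) : 2 ≤ T.G.diam := by
  obtain ⟨w₁, w₂, h₁, h₂, hne⟩ := T.exists_adj_ne_of_one_lt_sdeg ha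
  obtain ⟨w, -, hd⟩ := T.isTree.exists_adj_dist_succ h₁ h₂ hne w₁
  have := T.dist_le_diam w w₁
  have := dist_eq_one_iff_adj.2 h₁
  omega

/-- A path between two non-leaves can be prolonged at both ends. -/
lemma dist_add_two_le_diam (T : SignedTree) {a b : Fin T.n} (ha : 1 < T.sdeg a)
    (hb : 1 < T.sdeg b) : T.G.dist a b + 2 ≤ T.G.diam := by
  obtain ⟨w₁, w₂, h₁, h₂, hne⟩ := T.exists_adj_ne_of_one_lt_sdeg ha
  obtain ⟨a', -, ha'⟩ := T.isTree.exists_adj_dist_succ h₁ h₂ hne b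
  obtain ⟨u₁, u₂, k₁, k₂, kne⟩ := T.exists_adj_ne_of_one_lt_sdeg hb
  obtain ⟨b', -, hb'⟩ := T.isTree.exists_adj_dist_succ k₁ k₂ kne a'
  have := T.dist_le_diam b' a'
  have := T.G.dist_comm (u := a') (v := b)
  omega

lemma three_le_diam (T : SignedTree) {a b : Fin T.n} (ha : 1 < T.sdeg a)
    (hb : 1 < T.sdeg b) (hab : a ≠ b) : 3 ≤ T.G.diam := by
  have := T.dist_add_two_le_diam ha hb
  have := T.isTree.connected.pos_dist_of_ne hab
  omega

lemma four_le_diam (T : SignedTree) {a b c : Fin T.n} (ha : 1 < T.sdeg a)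
    (hb : 1 < T.sdeg b) (hc : 1 < T.sdeg c) (hab : a ≠ b) (hac : a ≠ c) (hbc : b ≠ c) :
    4 ≤ T.G.diam := by
  by_contra hlt
  have h1 := T.dist_add_two_le_diam ha hb
  have h2 := T.dist_add_two_le_diam ha hc
  have h3 := T.dist_add_two_le_diam hb hc
  have k1 := T.isTree.connected.pos_dist_of_ne hab
  have k2 := T.isTree.connected.pos_dist_of_ne hac
  have k3 := T.isTree.connected.pos_dist_of_ne hbc
  -- All three distances equal `1`, so `a`, `b`, `c` would form a triangle.
  have hadj : T.G.Adj b c := dist_eq_one_iff_adj.1 (by omega)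
  have := T.isTree.dist_ne_of_adj a hadj
  omega

end SignedTree

/-! ### Trees of depth two -/

/-- Vertices of the rooted tree of depth at most two with `m` children of the root, the `i`-th of
which carries `d i` leaves: `none` is the root, `some ⟨i, none⟩` its `i`-th child, and
`some ⟨i, some j⟩` the `j`-th leaf below that child. -/
abbrev SpiderVert (m : ℕ) (d : Fin m → ℕ) : Type := Option (Σ i : Fin m, Option (Fin (d i)))

/-- The parent of a vertex; the root is its own parent. -/
def spiderParent {m : ℕ} {d : Fin m → ℕ} : SpiderVert m d → SpiderVert m d
  | none => none
  | some ⟨_, none⟩ => none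
  | some ⟨i, some _⟩ => some ⟨i, none⟩

/-- The rooted tree of depth at most two in which each non-root vertex is joined to its parent. -/
def spider (m : ℕ) (d : Fin m → ℕ) : SimpleGraph (SpiderVert m d) :=
  SimpleGraph.fromRel fun u v => v = spiderParent u

section Spider

variable {m : ℕ} {d : Fin m → ℕ}

lemma spider_adj_root (i : Fin m) : (spider m d).Adj none (some ⟨i, none⟩) := by
  simp [spider, spiderParent]

lemma spider_adj_leaf (i : Fin m) (j : Fin (d i)) :
    (spider m d).Adj (some ⟨i, none⟩) (some ⟨i, some j⟩) := by
  simp [spider, spiderParent]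

lemma spider_connected : (spider m d).Connected := by
  have h : ∀ v, (spider m d).Reachable none v := by
    rintro (_ | ⟨i, _ | j⟩)
    · exact Reachable.refl _
    · exact (spider_adj_root i).reachable
    · exact (spider_adj_root i).reachable.trans (spider_adj_leaf i j).reachable
  exact (connected_iff _).2 ⟨fun u v => (h u).symm.trans (h v), ⟨none⟩⟩

/-- A connected graph with fewer edges than vertices is a tree, and every edge of the spider joins
a non-root vertex to its parent. -/
lemma spider_isTree : (spider m d).IsTree := by
  rw [isTree_iff_connected_and_card]
  refine ⟨spider_connected, le_antisymm ?_ spider_connected.card_vert_le_card_edgeSet_add_one⟩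
  let f : (Σ i : Fin m, Option (Fin (d i))) → Sym2 (SpiderVert m d) :=
    fun x => s(some x, spiderParent (some x))
  have hsub : (spider m d).edgeSet ⊆ Set.range f := by
    intro e
    induction e using Sym2.ind with
    | _ u v =>
      intro h
      rw [mem_edgeSet, spider, SimpleGraph.fromRel_adj] at h
      obtain ⟨hne, h | h⟩ := h
      · subst h
        cases u with
        | none => exact absurd rfl hne
        | some x => exact ⟨x, rfl⟩
      · subst h
        cases v with
        | none => exact absurd rfl hne
        | some x => exact ⟨x, Sym2.eq_swap⟩
  have h1 : Nat.card (spider m d).edgeSet ≤ Nat.card (Set.range f) :=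
    Nat.card_mono (Set.toFinite _) hsub
  have h2 : Nat.card (Set.range f) ≤ Nat.card (Σ i : Fin m, Option (Fin (d i))) :=
    Finite.card_range_le f
  rw [Finite.card_option]
  omega

lemma spider_ncard_root : ((spider m d).neighborSet none).ncard = m := by
  have h : (spider m d).neighborSet none = Set.range fun i : Fin m => some ⟨i, none⟩ := by
    ext v
    rcases v with _ | ⟨i, _ | j⟩ <;> simp [spider, spiderParent]
  rw [h, ← Nat.card_coe_set_eq, Nat.card_range_of_injective]
  · simp
  · intro a b hab
    exact (Sigma.mk.inj (Option.some.inj hab)).1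

lemma spider_ncard_child (i : Fin m) :
    ((spider m d).neighborSet (some ⟨i, none⟩)).ncard = d i + 1 := by
  have h : (spider m d).neighborSet (some ⟨i, none⟩) =
      insert none (Set.range fun j : Fin (d i) => some ⟨i, some j⟩) := by
    ext v
    rcases v with _ | ⟨k, _ | j⟩
    · simp [spider, spiderParent]
    · by_cases hk : i = k
      · subst hk
        simp [spider, spiderParent]
      · simp [spider, spiderParent, hk]
    · by_cases hk : i = k
      · subst hk
        simp [spider, spiderParent]
      · simp [spider, spiderParent, hk]
  rw [h, Set.ncard_insert_of_notMem (by simp), ← Nat.card_coe_set_eq,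
    Nat.card_range_of_injective]
  · simp
  · intro a b hab
    simpa using hab

lemma spider_ncard_leaf (i : Fin m) (j : Fin (d i)) :
    ((spider m d).neighborSet (some ⟨i, some j⟩)).ncard = 1 := by
  rw [Set.ncard_eq_one]
  refine ⟨some ⟨i, none⟩, ?_⟩
  ext v
  rcases v with _ | ⟨k, _ | l⟩
  · simp [spider, spiderParent]
  · by_cases hk : i = k
    · subst hk
      simp [spider, spiderParent]
    · simp [spider, spiderParent, hk, Ne.symm hk]
  · by_cases hk : i = k
    · subst hk
      simp [spider, spiderParent]
    · simp [spider, spiderParent, hk, Ne.symm hk]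

/-- The distance of a vertex from the root. -/
def spiderDepth : SpiderVert m d → ℕ
  | none => 0
  | some ⟨_, none⟩ => 1
  | some ⟨_, some _⟩ => 2

lemma spider_dist_root_le (v : SpiderVert m d) : (spider m d).dist none v ≤ spiderDepth v := by
  rcases v with _ | ⟨i, _ | j⟩
  · simp
  · exact dist_le (Walk.cons (spider_adj_root i) Walk.nil)
  · exact dist_le (Walk.cons (spider_adj_root i) (Walk.cons (spider_adj_leaf i j) Walk.nil))

lemma spider_dist_le (u v : SpiderVert m d) :
    (spider m d).dist u v ≤ spiderDepth u + spiderDepth v := by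
  have h := spider_connected (m := m) (d := d) |>.dist_triangle (u := u) (v := none) (w := v)
  have hu := spider_dist_root_le u
  have hv := spider_dist_root_le v
  rw [SimpleGraph.dist_comm] at hu
  omega

lemma spider_dist_le_four (u v : SpiderVert m d) : (spider m d).dist u v ≤ 4 := by
  have h : ∀ v : SpiderVert m d, spiderDepth v ≤ 2 := by
    rintro (_ | ⟨i, _ | j⟩) <;> simp [spiderDepth]
  have := spider_dist_le u v
  have := h u
  have := h v
  omega

/-- If only one child of the root carries leaves, two vertices of depth two are siblings. -/
lemma spider_dist_le_three (hd : ∀ i k, d i ≠ 0 → d k ≠ 0 → i = k) (u v : SpiderVert m d) :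
    (spider m d).dist u v ≤ 3 := by
  have := spider_dist_le u v
  rcases u with _ | ⟨i, _ | j⟩ <;> rcases v with _ | ⟨k, _ | l⟩ <;>
    simp only [spiderDepth] at this <;> try omega
  obtain rfl := hd i k (Nat.ne_zero_of_lt j.2) (Nat.ne_zero_of_lt l.2)
  exact (dist_le (Walk.cons (spider_adj_leaf i j).symm
    (Walk.cons (spider_adj_leaf i l) Walk.nil))).trans (by simp)

lemma spider_dist_le_two (hd : ∀ i, d i = 0) (u v : SpiderVert m d) :
    (spider m d).dist u v ≤ 2 := by
  have h : ∀ v : SpiderVert m d, spiderDepth v ≤ 1 := by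
    rintro (_ | ⟨i, _ | j⟩)
    · simp [spiderDepth]
    · simp [spiderDepth]
    · exact absurd (hd i) (Nat.ne_zero_of_lt j.2)
  have := spider_dist_le u v
  have := h u
  have := h v
  omega

end Spider

/-! ### The realizing tree -/

/-- Any finite tree, with all edges positive, is isomorphic to the tree of a `SignedTree`. -/
lemma exists_signedTree_iso {V : Type} [Finite V] {G : SimpleGraph V} (hG : G.IsTree) :
    ∃ (T : SignedTree) (f : T.G ≃g G), ∀ v, T.sdeg v = ((G.neighborSet (f v)).ncard : ℤ) := by
  classical
  let e := Finite.equivFin V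
  let f : G.comap e.symm ≃g G := SimpleGraph.Iso.comap e.symm G
  refine ⟨⟨Nat.card V, G.comap e.symm, inferInstance, f.isTree_iff.2 hG, fun _ => true⟩, f, ?_⟩
  intro v
  have h : (G.neighborSet (f v)).ncard = ((G.comap e.symm).neighborSet v).ncard := by
    rw [← Nat.card_coe_set_eq, ← Nat.card_coe_set_eq]
    exact (Nat.card_congr (f.mapNeighborSet v)).symm
  rw [h]
  simp [SignedTree.sdeg, Set.ncard_eq_toFinset_card', SimpleGraph.neighborFinset]

lemma diam_le_of_iso {V W : Type*} {G : SimpleGraph V} {H : SimpleGraph W} [Nonempty V]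
    (hH : H.Connected) (f : G ≃g H) {k : ℕ} (hk : ∀ u v, H.dist u v ≤ k) :
    G.diam ≤ k := by
  obtain ⟨u, v, huv⟩ := G.exists_dist_eq_diam
  rw [← huv]
  obtain ⟨p, hp⟩ := hH.exists_walk_length_eq_dist (f u) (f v)
  have := dist_le (p.map f.symm.toHom)
  simp at this
  have := hk (f u) (f v)
  omega

lemma exists_realizes_spider (m : ℕ) (d : Fin m → ℕ) {D : Set ℤ} {k : ℕ} (hm : (m : ℤ) ∈ D)
    (h1 : (1 : ℤ) ∈ D) (hd : ∀ i, (d i + 1 : ℤ) ∈ D)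
    (hD : ∀ x ∈ D, x = m ∨ ∃ i, x = d i + 1) (hk : ∀ u v, (spider m d).dist u v ≤ k) :
    ∃ T : SignedTree, T.Realizes D ∧ T.G.diam ≤ k := by
  obtain ⟨T, f, hT⟩ := exists_signedTree_iso (spider_isTree (m := m) (d := d))
  have : Nonempty (Fin T.n) := ⟨f.symm none⟩
  refine ⟨T, ?_, diam_le_of_iso spider_connected f hk⟩
  refine Set.Subset.antisymm ?_ ?_
  · intro x hx
    rcases hD x hx with rfl | ⟨i, rfl⟩
    · exact ⟨f.symm none, by simp [hT, spider_ncard_root]⟩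
    · exact ⟨f.symm (some ⟨i, none⟩), by simp [hT, spider_ncard_child]⟩
  · rintro _ ⟨v, rfl⟩
    rw [hT]
    rcases f v with _ | ⟨i, _ | j⟩
    · rwa [spider_ncard_root]
    · rw [spider_ncard_child]
      exact_mod_cast hd i
    · rw [spider_ncard_leaf]
      exact_mod_cast h1

/-- Child `i` of the root carries `i` leaves if its degree `i + 1` is needed to realize an element
of `X` other than `m`, the degree of the root; otherwise it is a leaf. -/
def childLeaves (X : Finset ℤ) (m : ℕ) (i : Fin m) : ℕ :=
  if ((i : ℤ) + 1) ∈ X.erase (m : ℤ) then i else 0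

lemma childLeaves_ne_zero {X : Finset ℤ} {m : ℕ} {i : Fin m} (h : childLeaves X m i ≠ 0) :
    ((i : ℤ) + 1) ∈ X.erase (m : ℤ) := by
  by_contra hn
  exact h (if_neg hn)

lemma exists_realizes (X : Finset ℤ) (hne : X.Nonempty) (hx : ∀ x ∈ X, 1 < x) :
    ∃ m : ℕ, (m : ℤ) ∈ X ∧ ∀ k, (∀ u v, (spider m (childLeaves X m)).dist u v ≤ k) →
      ∃ T : SignedTree, T.Realizes (insert 1 (X : Set ℤ)) ∧ T.G.diam ≤ k := by
  have hmax := X.max'_mem hne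
  obtain ⟨m, hm⟩ := Int.eq_ofNat_of_zero_le (zero_le_one.trans (hx _ hmax).le)
  have hmX : (m : ℤ) ∈ X := hm ▸ hmax
  have hle : ∀ x ∈ X, x ≤ m := fun x h => hm ▸ X.le_max' x h
  have hm1 := hx _ hmX
  refine ⟨m, hmX, fun k hk => exists_realizes_spider m _ (Or.inr hmX) (Or.inl rfl) ?_ ?_ hk⟩
  · intro i
    unfold childLeaves
    split_ifs with h
    · exact Or.inr (Finset.mem_of_mem_erase h)
    · exact Or.inl (by simp)
  · rintro x (rfl | hxX)
    · -- The first child of the root carries no leaves in either case.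
      exact Or.inr ⟨⟨0, by omega⟩, by simp [childLeaves]⟩
    · by_cases hxm : x = m
      · exact Or.inl hxm
      · have h1 := hx x hxX
        have h2 := hle x hxX
        refine Or.inr ⟨⟨(x - 1).toNat, by omega⟩, ?_⟩
        have hcast : (((x - 1).toNat : ℕ) : ℤ) = x - 1 := Int.toNat_of_nonneg (by omega)
        have hmem : (((x - 1).toNat : ℕ) : ℤ) + 1 ∈ X.erase (m : ℤ) := by
          rw [hcast, sub_add_cancel]
          exact Finset.mem_erase.2 ⟨hxm, hxX⟩
        simp only [childLeaves, if_pos hmem]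
        omega

lemma diamOfSet_eq {D : Set ℤ} {k : ℕ} (hlow : ∀ T : SignedTree, T.Realizes D → k ≤ T.G.diam)
    (hup : ∃ T : SignedTree, T.Realizes D ∧ T.G.diam ≤ k) : diamOfSet D = k := by
  obtain ⟨T, hT, hk⟩ := hup
  refine le_antisymm (le_trans (Nat.sInf_le ⟨T, hT, rfl⟩) hk) (le_csInf ⟨T.G.diam, T, hT, rfl⟩ ?_)
  rintro _ ⟨S, hS, rfl⟩
  exact hlow S hS

/-- For `D = {1} ∪ X` with `X` a nonempty set of `n` distinct integers
each greater than 1: `diam(D) = 2` if `n = 1`, `3` if `n = 2`, and `4` if `n > 2`. -/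
theorem stmt_3 (n : ℕ) (X : Finset ℤ) (hcard : X.card = n) (hne : X.Nonempty)
    (hx : ∀ x ∈ X, 1 < x) (D : Set ℤ) (hD : D = insert 1 (↑X : Set ℤ)) :
    (n = 1 → diamOfSet D = 2) ∧ (n = 2 → diamOfSet D = 3) ∧ (2 < n → diamOfSet D = 4) := by
  subst hD
  obtain ⟨m, hmX, hup⟩ := exists_realizes X hne hx
  have herase := Finset.card_erase_of_mem hmX
  have hreal : ∀ T : SignedTree, T.Realizes (insert 1 (X : Set ℤ)) → ∀ x ∈ X,
      ∃ v, T.sdeg v = x := by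
    intro T hT x hxX
    have : x ∈ Set.range T.sdeg := by
      rw [← show insert 1 (X : Set ℤ) = Set.range T.sdeg from hT]
      exact Or.inr hxX
    exact this
  refine ⟨fun hn => diamOfSet_eq ?_ (hup 2 (spider_dist_le_two ?_)),
    fun hn => diamOfSet_eq ?_ (hup 3 (spider_dist_le_three ?_)),
    fun hn => diamOfSet_eq ?_ (hup 4 spider_dist_le_four)⟩
  · intro T hT
    obtain ⟨v, hv⟩ := hreal T hT m hmX
    exact T.two_le_diam (hv ▸ hx _ hmX)
  · intro i
    by_contra hi
    have := Finset.card_pos.2 (show (X.erase (m : ℤ)).Nonempty from ⟨_, childLeaves_ne_zero hi⟩)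
    omega
  · intro T hT
    obtain ⟨x, hxX, y, hyX, hxy⟩ := Finset.one_lt_card.1 (show 1 < X.card by omega)
    obtain ⟨v, rfl⟩ := hreal T hT x hxX
    obtain ⟨w, rfl⟩ := hreal T hT y hyX
    exact T.three_le_diam (hx _ hxX) (hx _ hyX) (ne_of_apply_ne _ hxy)
  · intro i k hi hk
    have hle : (X.erase (m : ℤ)).card ≤ 1 := by omega
    have := Finset.card_le_one.1 hle _ (childLeaves_ne_zero hi) _ (childLeaves_ne_zero hk)
    omega
  · intro T hT
    obtain ⟨x, y, z, hxX, hyX, hzX, hxy, hxz, hyz⟩ :=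
      Finset.two_lt_card_iff.1 (show 2 < X.card by omega)
    obtain ⟨u, rfl⟩ := hreal T hT x hxX
    obtain ⟨v, rfl⟩ := hreal T hT y hyX
    obtain ⟨w, rfl⟩ := hreal T hT z hzX
    exact T.four_le_diam (hx _ hxX) (hx _ hyX) (hx _ hzX) (ne_of_apply_ne _ hxy)
      (ne_of_apply_ne _ hxz) (ne_of_apply_ne _ hyz)
end

section
/- Let A and B be finite sets of integers with A ⊆ B, 1 ∈ A, and −1 ∉ B. Then diam(A) ≤ diam(B). -/
open SimpleGraph

namespace SignedTreeDiam

/-! ### Signed degrees and diameters -/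

/-- The set of inner (non-leaf) vertices of `G`: those with at least two distinct neighbours. -/
def inner {V : Type} (G : SimpleGraph V) : Set V :=
  {v | ∃ a b, a ≠ b ∧ G.Adj v a ∧ G.Adj v b}

/-- The signed degree for an arbitrary vertex type, with cardinalities taken as `Set.ncard`. -/
noncomputable def sd {V : Type} (G : SimpleGraph V) (s : Sym2 V → Bool) (v : V) : ℤ :=
  ({w | G.Adj v w ∧ s s(v, w) = true}.ncard : ℤ) - {w | G.Adj v w ∧ s s(v, w) = false}.ncard

lemma sdeg_eq (T : SignedTree) (v : Fin T.n) : T.sdeg v = sd T.G T.sgn v := by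
  let := T.adjDec
  unfold SignedTree.sdeg sd
  rw [← Set.ncard_coe_finset, ← Set.ncard_coe_finset]
  congr 3 <;> ext w <;> simp

lemma dist_map_le {V W : Type} {G : SimpleGraph V} {H : SimpleGraph W} (hG : G.Connected)
    (f : G →g H) (x y : V) : H.dist (f x) (f y) ≤ G.dist x y := by
  obtain ⟨p, hp⟩ := hG.exists_walk_length_eq_dist x y
  rw [← hp, ← Walk.length_map (f := f)]
  exact dist_le _

lemma dist_le_diam_of_finite {V : Type} [Finite V] {G : SimpleGraph V} (hG : G.Connected)
    (x y : V) : G.dist x y ≤ G.diam :=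
  have := hG.nonempty
  dist_le_diam (connected_iff_ediam_ne_top.1 hG)

/-- Transport of a signed tree on any finite vertex type to a `SignedTree`, which lives on `Fin n`. -/
lemma exists_signedTree {V : Type} [Finite V] {G : SimpleGraph V} (hG : G.IsTree)
    (s : Sym2 V → Bool) :
    ∃ T : SignedTree, T.Realizes (Set.range (sd G s)) ∧ T.G.diam ≤ G.diam := by
  classical
  let e : Fin (Nat.card V) ≃ V := (Finite.equivFin V).symm
  let i : G.comap e ≃g G := Iso.comap e G
  have hT : (G.comap e).IsTree := i.isTree_iff.2 hG
  refine ⟨⟨_, G.comap e, Classical.decRel _, hT, fun x => s (x.map e)⟩, ?_, ?_⟩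
  · unfold SignedTree.Realizes
    rw [← e.surjective.range_comp]
    congr 1
    ext v
    rw [sdeg_eq]
    have key : ∀ b, {w | G.Adj (e v) w ∧ s s(e v, w) = b}.ncard =
        {w | (G.comap e).Adj v w ∧ s (s(v, w).map e) = b}.ncard := fun b => by
      rw [← Set.ncard_image_of_injective _ e.injective]
      congr 1
      ext w
      constructor
      · intro h
        exact ⟨e.symm w, by simpa using h, by simp⟩
      · rintro ⟨w, h, rfl⟩
        simpa using h
    simp only [sd, Function.comp, key]
  · have := hT.connected.nonempty
    obtain ⟨u, v, huv⟩ := exists_dist_eq_diam (G := G.comap e)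
    change (G.comap e).diam ≤ _
    rw [← huv]
    refine le_trans ?_ (dist_le_diam_of_finite hG.connected (e u) (e v))
    simpa [i] using dist_map_le hG.connected i.symm.toHom (e u) (e v)

/-! ### Hanging pendant vertices on a tree -/

/-- The graph obtained from `G` by attaching `c v` new pendant vertices at every vertex `v`. -/
def addLeaves {V : Type} (G : SimpleGraph V) (c : V → ℕ) :
    SimpleGraph (V ⊕ Σ v, Fin (c v)) where
  Adj
    | .inl a, .inl b => G.Adj a b
    | .inl a, .inr l => l.1 = a
    | .inr l, .inl a => l.1 = a
    | .inr _, .inr _ => False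
  symm := ⟨by rintro (a | a) (b | b) h <;> first | exact h.elim | exact G.adj_symm h | exact h⟩
  loopless := ⟨by rintro (a | a) h <;> first | exact G.irrefl h | exact h⟩

section addLeaves

variable {V : Type} {G : SimpleGraph V} {c : V → ℕ}

@[simp] lemma adj_ll {a b : V} : (addLeaves G c).Adj (.inl a) (.inl b) ↔ G.Adj a b := Iff.rfl
@[simp] lemma adj_lr {a : V} {l} : (addLeaves G c).Adj (.inl a) (.inr l) ↔ l.1 = a := Iff.rfl
@[simp] lemma adj_rl {a : V} {l} : (addLeaves G c).Adj (.inr l) (.inl a) ↔ l.1 = a := Iff.rfl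
@[simp] lemma adj_rr {l m} : ¬ (addLeaves G c).Adj (.inr l) (.inr m) := id

/-- The base vertex carrying a given vertex of `addLeaves G c`. -/
def base : V ⊕ (Σ v, Fin (c v)) → V := Sum.elim id Sigma.fst

/-- The inclusion of `G` into `addLeaves G c`. -/
def inlHom : G →g addLeaves G c := ⟨Sum.inl, fun h => h⟩

lemma adj_inr_iff {l : Σ v, Fin (c v)} {x} :
    (addLeaves G c).Adj (.inr l) x ↔ x = .inl l.1 := by
  rcases x with a | m
  · simp [eq_comm]
  · simp

lemma addLeaves_reachable_base (x) : (addLeaves G c).Reachable x (.inl (base x)) := by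
  rcases x with a | l
  · exact Reachable.refl _
  · exact Adj.reachable (by simp [base])

lemma dist_base_le (x) : (addLeaves G c).dist x (.inl (base x)) ≤ 1 := by
  rcases x with a | l
  · simp [base]
  · exact (dist_eq_one_iff_adj.2 (by simp [base])).le

lemma addLeaves_connected (hG : G.Connected) : (addLeaves G c).Connected := by
  have := hG.nonempty
  have : Nonempty (V ⊕ Σ v, Fin (c v)) := ⟨.inl (Classical.arbitrary V)⟩
  refine ⟨fun x y => ?_⟩
  exact (addLeaves_reachable_base x).trans
    (((hG (base x) (base y)).map inlHom).trans (addLeaves_reachable_base y).symm)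

/-- Every edge is a bridge: after deleting an edge of `G`, a walk projects to a walk of `G` that
avoids this edge, and after deleting a pendant edge its pendant end is isolated. -/
lemma addLeaves_isTree (hG : G.IsTree) : (addLeaves G c).IsTree := by
  refine ⟨addLeaves_connected hG.connected, isAcyclic_iff_forall_adj_isBridge.2 ?_⟩
  have hpend : ∀ l : Σ v, Fin (c v), (addLeaves G c).IsBridge s(.inr l, .inl l.1) := by
    intro l
    rw [isBridge_iff]
    rintro ⟨p⟩
    cases p with
    | cons h p =>
      rw [deleteEdges_adj, adj_inr_iff] at h
      obtain ⟨rfl, h⟩ := h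
      simp at h
  rintro (a | l) (b | m) h
  · have hb := isAcyclic_iff_forall_adj_isBridge.1 hG.isAcyclic (adj_ll.1 h)
    rw [isBridge_iff] at hb ⊢
    rintro ⟨p⟩
    apply hb
    have key : ∀ {x y} (_ : ((addLeaves G c).deleteEdges {s(.inl a, .inl b)}).Walk x y),
        (G.deleteEdges {s(a, b)}).Reachable (base x) (base y) := by
      intro x y p
      induction p with
      | nil => exact Reachable.refl _
      | @cons x y z h p ih =>
        refine Reachable.trans ?_ ih
        rw [deleteEdges_adj] at h
        obtain ⟨h, hne⟩ := h
        rcases x with x | x <;> rcases y with y | y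
        · refine Adj.reachable ?_
          rw [deleteEdges_adj]
          refine ⟨h, ?_⟩
          simpa [base] using hne
        · obtain rfl := adj_lr.1 h
          exact Reachable.refl _
        · obtain rfl := adj_rl.1 h
          exact Reachable.refl _
        · exact (adj_rr h).elim
    exact key p
  · obtain rfl := adj_lr.1 h
    rw [Sym2.eq_swap]
    exact hpend m
  · obtain rfl := adj_rl.1 h
    exact hpend l
  · exact (adj_rr h).elim

lemma addLeaves_diam_le [Finite V] (hG : G.Connected) :
    (addLeaves G c).diam ≤ G.diam + 2 := by
  have hc : (addLeaves G c).Connected := addLeaves_connected hG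
  have := hc.nonempty
  obtain ⟨x, y, hxy⟩ := exists_dist_eq_diam (G := addLeaves G c)
  rw [← hxy]
  have h1 := hc.dist_triangle (u := x) (v := .inl (base x)) (w := y)
  have h2 := hc.dist_triangle (u := .inl (base x)) (v := .inl (base y)) (w := y)
  have h3 : (addLeaves G c).dist (.inl (base x)) (.inl (base y)) ≤ _ :=
    dist_map_le hG inlHom (base x) (base y)
  have h4 := dist_le_diam_of_finite hG (base x) (base y)
  have h5 := dist_base_le (G := G) x
  have h6 := dist_base_le (G := G) y
  rw [dist_comm] at h6
  omega

/-- The signing in which exactly the pendant edges are positive. -/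
noncomputable def leafSign (e : Sym2 (V ⊕ Σ v, Fin (c v))) : Bool :=
  open Classical in decide (∃ l, Sum.inr l ∈ e)

lemma ncard_inr_fiber (v : V) :
    {w : V ⊕ Σ v, Fin (c v) | ∃ i, w = .inr ⟨v, i⟩}.ncard = c v := by
  have : {w : V ⊕ Σ v, Fin (c v) | ∃ i, w = .inr ⟨v, i⟩} =
      Set.range fun i : Fin (c v) => (Sum.inr ⟨v, i⟩ : V ⊕ Σ v, Fin (c v)) := by
    ext w; simp [eq_comm]
  rw [this, Set.ncard_range_of_injective, Nat.card_fin]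
  intro i j h
  simpa using h

lemma sd_inl (v : V) :
    sd (addLeaves G c) leafSign (.inl v) = (c v : ℤ) - {w | G.Adj v w}.ncard := by
  unfold sd
  congr 2
  · rw [← ncard_inr_fiber (c := c) v]
    congr 1
    ext (w | ⟨w, i⟩)
    · simp [leafSign]
    · simp only [Set.mem_ofPred_eq, adj_lr, leafSign]
      constructor
      · rintro ⟨rfl, -⟩
        exact ⟨i, rfl⟩
      · rintro ⟨j, hj⟩
        have := congrArg base hj
        refine ⟨this, ?_⟩
        simp
  · rw [← Set.ncard_image_of_injective {w | G.Adj v w}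
      (Sum.inl_injective (β := Σ v, Fin (c v)))]
    congr 1
    ext (w | ⟨w, i⟩)
    · simp [leafSign]
    · simp [leafSign]

lemma sd_inr (l : Σ v, Fin (c v)) : sd (addLeaves G c) leafSign (.inr l) = 1 := by
  unfold sd
  have h1 : {w | (addLeaves G c).Adj (.inr l) w ∧ leafSign s(.inr l, w) = true} =
      {Sum.inl l.1} := by
    ext w
    simp [adj_inr_iff, leafSign]
  have h2 : {w | (addLeaves G c).Adj (.inr l) w ∧ leafSign s(.inr l, w) = false} = ∅ := by
    ext w
    simp [leafSign]
  rw [h1, h2]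
  simp

end addLeaves

/-- Make all edges of a tree `G` negative and hang `t v + deg v` positive pendant edges at each
vertex `v`: the vertex `v` then gets signed degree `t v`, and every new vertex gets `1`. -/
lemma exists_realizes {V : Type} [Finite V] {G : SimpleGraph V} (hG : G.IsTree) (t : V → ℤ)
    (ht : ∀ v, 0 ≤ t v + {w | G.Adj v w}.ncard)
    (h1 : ∃ v, t v = 1 ∨ 0 < t v + {w | G.Adj v w}.ncard) :
    ∃ T : SignedTree, T.Realizes (insert 1 (Set.range t)) ∧ T.G.diam ≤ G.diam + 2 := by
  let c : V → ℕ := fun v => (t v + {w | G.Adj v w}.ncard).toNat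
  have hc : ∀ v, (c v : ℤ) = t v + {w | G.Adj v w}.ncard := fun v => Int.toNat_of_nonneg (ht v)
  have hl : ∀ v, sd (addLeaves G c) leafSign (.inl v) = t v := fun v => by
    rw [sd_inl, hc]; ring
  obtain ⟨T, hT, hd⟩ := exists_signedTree (addLeaves_isTree (c := c) hG) leafSign
  refine ⟨T, ?_, hd.trans (addLeaves_diam_le hG.connected)⟩
  convert hT using 1
  ext x
  constructor
  · rintro (rfl | ⟨v, rfl⟩)
    · obtain ⟨v, hv | hv⟩ := h1
      · exact ⟨.inl v, by rw [hl, hv]⟩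
      · have : 0 < c v := by have := hc v; omega
        exact ⟨.inr ⟨v, ⟨0, this⟩⟩, sd_inr _⟩
    · exact ⟨.inl v, hl v⟩
  · rintro ⟨v | l, rfl⟩
    · rw [hl]
      exact Or.inr ⟨v, rfl⟩
    · exact Or.inl (sd_inr l)


/-! ### The inner vertices of a tree -/

section inner

variable {V : Type} {G : SimpleGraph V}

/-- In a tree, geodesics extend beyond an inner vertex. -/
lemma exists_dist_add_one (hG : G.IsTree) {u : V} (hu : u ∈ inner G) (v : V) :
    ∃ u', G.dist u' v = G.dist u v + 1 := by
  obtain ⟨p, hp, hlen⟩ := hG.connected.exists_path_of_dist u v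
  obtain ⟨a, b, hab, ha, hb⟩ := hu
  have key : ∀ c, G.Adj u c → c ∉ p.support → ∃ u', G.dist u' v = G.dist u v + 1 := by
    intro c hc hcp
    obtain ⟨q, hq, hqlen⟩ := hG.connected.exists_path_of_dist c v
    have := congrArg (fun r : G.Path c v => r.1.length)
      ((hG.isAcyclic.subsingleton_path c v).elim ⟨q, hq⟩ ⟨p.cons hc.symm, hp.cons hcp⟩)
    refine ⟨c, ?_⟩
    simp only [Walk.length_cons] at this
    omega
  by_cases hap : a ∈ p.support
  · by_cases hbp : b ∈ p.support
    · exact absurd ((hG.isAcyclic.eq_snd_of_adj_start hp ha hap).trans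
        (hG.isAcyclic.eq_snd_of_adj_start hp hb hbp).symm) hab
    · exact key b hb hbp
  · exact key a ha hap

/-- The interior vertices of a path have two distinct neighbours on this path. -/
lemma path_support_inner {u v : V} (p : G.Walk u v) (hp : p.IsPath) (hu : u ∈ inner G)
    (hv : v ∈ inner G) : ∀ x ∈ p.support, x ∈ inner G := by
  induction p with
  | nil => simpa using hu
  | @cons u w v h p ih =>
    have hw : w ∈ inner G := by
      cases p with
      | nil => exact hv
      | @cons _ y _ h' p =>
        refine ⟨u, y, ?_, h.symm, h'⟩
        rintro rfl
        simp [Walk.isPath_def] at hp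
    intro x hx
    rw [Walk.support_cons, List.mem_cons] at hx
    rcases hx with rfl | hx
    · exact hu
    · exact ih hp.of_cons hw hv x hx

/-- Geodesics of `G` between inner vertices stay among the inner vertices. -/
lemma exists_walk_inner (hG : G.Connected) (u v : inner G) :
    ∃ p : (G.induce (inner G)).Walk u v, p.length = G.dist u v := by
  obtain ⟨p, hp, hlen⟩ := hG.exists_path_of_dist (u : V) v
  refine ⟨p.induce _ (path_support_inner p hp u.2 v.2), ?_⟩
  rw [← hlen, ← Walk.length_map (f := (Embedding.induce (inner G)).toHom), Walk.map_induce]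
  rfl

lemma inner_isTree (hG : G.IsTree) (h : (inner G).Nonempty) : (G.induce (inner G)).IsTree := by
  have := h.to_subtype
  exact ⟨⟨fun u v => (exists_walk_inner hG.connected u v).choose.reachable⟩,
    hG.isAcyclic.induce _⟩

/-- A diametral path of the tree of inner vertices extends by one edge at either end. -/
lemma inner_diam_add_two_le [Finite V] (hG : G.IsTree) (h : (inner G).Nonempty) :
    (G.induce (inner G)).diam + 2 ≤ G.diam := by
  have := h.to_subtype
  obtain ⟨u, v, huv⟩ := exists_dist_eq_diam (G := G.induce (inner G))
  obtain ⟨p, hp⟩ := exists_walk_inner hG.connected u v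
  have h1 := dist_le p
  obtain ⟨u', hu'⟩ := exists_dist_add_one hG u.2 v
  obtain ⟨v', hv'⟩ := exists_dist_add_one hG v.2 u'
  have h2 := dist_le_diam_of_finite hG.connected v' u'
  rw [G.dist_comm (u := (v : V))] at hv'
  omega

lemma exists_inner_adj (hG : G.Connected) (h : (inner G).Nonempty) {w : V} (hw : w ∉ inner G) :
    ∃ x ∈ inner G, G.Adj w x := by
  obtain ⟨u, hu⟩ := h
  obtain ⟨p, hp, -⟩ := hG.exists_path_of_dist w u
  cases p with
  | nil => exact absurd hu hw
  | @cons _ x _ h p =>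
    refine ⟨x, ?_, h⟩
    cases p with
    | nil => exact hu
    | @cons _ y _ h' p =>
      refine ⟨w, y, ?_, h.symm, h'⟩
      rintro rfl
      simp [Walk.isPath_def] at hp

/-- A vertex with exactly one neighbour has signed degree `1` or `-1`, according to the sign of its
edge. -/
lemma sd_of_not_inner {s : Sym2 V → Bool} {w x : V} (hw : w ∉ inner G) (h : G.Adj w x) :
    sd G s w = if s s(w, x) then 1 else -1 := by
  have hx : ∀ y, G.Adj w y → y = x := fun y hy => by
    by_contra hne
    exact hw ⟨y, x, hne, hy, h⟩
  have key : ∀ b, {y | G.Adj w y ∧ s s(w, y) = b} = if s s(w, x) = b then {x} else ∅ := by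
    intro b
    ext y
    split_ifs with hs
    · exact ⟨fun hy => hx y hy.1, by rintro rfl; exact ⟨h, hs⟩⟩
    · simp only [Set.mem_ofPred_eq, Set.mem_empty_iff_false, iff_false]
      rintro ⟨hy, hb⟩
      obtain rfl := hx y hy
      exact hs hb
  unfold sd
  rw [key, key]
  cases s s(w, x) <;> simp

lemma sd_of_isolated {s : Sym2 V → Bool} {w : V} (h : ∀ x, ¬ G.Adj w x) : sd G s w = 0 := by
  simp [sd, h]

/-- If no leaf has signed degree `-1`, negative edges at an inner vertex lead to inner vertices. -/
lemma pos_le_sd_add [Finite V] {s : Sym2 V → Bool} (hs : ∀ v, sd G s v ≠ -1) (v : inner G) :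
    ({w | G.Adj v w ∧ s s(↑v, w) = true}.ncard : ℤ) ≤
      sd G s v + {w | (G.induce (inner G)).Adj v w}.ncard := by
  have : {w | G.Adj v w ∧ s s(↑v, w) = false}.ncard ≤
      {w | (G.induce (inner G)).Adj v w}.ncard := by
    rw [← Set.ncard_image_of_injective {w | (G.induce (inner G)).Adj v w}
      Subtype.val_injective]
    refine Set.ncard_le_ncard ?_ (Set.toFinite _)
    rintro w ⟨hw, hsw⟩
    have hin : w ∈ inner G := by
      by_contra hin
      apply hs w
      rw [sd_of_not_inner hin hw.symm, Sym2.eq_swap, hsw]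
      simp
    exact ⟨⟨w, hin⟩, hw, rfl⟩
  unfold sd
  omega

end inner

/-! ### Realizing sets -/

/-- Any finite set containing `1` is realized by some signed tree. The underlying tree is obtained
from a tree on `B` by hanging enough pendant vertices everywhere that `exists_realizes` applies with
the prescribed signed degree `b` at each `b ∈ B`. -/
lemma exists_tree_realizes {B : Set ℤ} (hB : B.Finite) (h1 : (1 : ℤ) ∈ B) :
    ∃ T : SignedTree, T.Realizes B := by
  have := hB.to_subtype
  have : Nonempty B := ⟨⟨1, h1⟩⟩
  obtain ⟨G, -, hG⟩ := (connected_top (V := B)).exists_isTree_le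
  let c : B → ℕ := fun b => (-(b : ℤ)).toNat
  have hc : ∀ b : B, c b ≤ {w | (addLeaves G c).Adj (.inl b) w}.ncard := fun b => by
    rw [← ncard_inr_fiber (c := c) b]
    refine Set.ncard_le_ncard ?_ (Set.toFinite _)
    rintro w ⟨i, rfl⟩
    simp
  let t : B ⊕ (Σ b, Fin (c b)) → ℤ := Sum.elim (fun b => (b : ℤ)) fun _ => 1
  obtain ⟨T, hT, -⟩ := exists_realizes (addLeaves_isTree (c := c) hG) t (by
    rintro (b | l)
    · have := hc b
      simp only [t, c, Sum.elim_inl] at this ⊢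
      omega
    · simp only [t, Sum.elim_inr]
      positivity) ⟨.inl ⟨1, h1⟩, Or.inl rfl⟩
  refine ⟨T, ?_⟩
  convert hT using 1
  simp [t, Set.Sum.elim_range]
  ext x
  simp only [Set.mem_insert_iff, Set.mem_union, Set.mem_range]
  grind

/-- Any tree realizing `B` can be rebuilt, without increasing the diameter, to realize `A`: keep the
tree of inner vertices and prescribe the old signed degree where it lies in `A`, and `1` elsewhere. -/
lemma exists_realizes_subset {A B : Set ℤ} (hAB : A ⊆ B) (h1 : (1 : ℤ) ∈ A)
    (hm1 : (-1 : ℤ) ∉ B) (T : SignedTree) (hT : T.Realizes B) :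
    ∃ T' : SignedTree, T'.Realizes A ∧ T'.G.diam ≤ T.G.diam := by
  classical
  have hB : B = Set.range (sd T.G T.sgn) := by
    rw [hT]
    congr 1
    ext v
    exact sdeg_eq T v
  have hs : ∀ v, sd T.G T.sgn v ≠ -1 := fun v hv => hm1 (hB ▸ ⟨v, hv⟩)
  obtain ⟨w, hw⟩ : ∃ w, sd T.G T.sgn w = 1 := by
    have h := hAB h1
    rwa [hB] at h
  have hconn := T.isTree.connected
  -- A vertex that is not inner has signed degree `1`, as an isolated vertex is excluded by `w`.
  have hout : ∀ v, v ∉ inner T.G → sd T.G T.sgn v = 1 := by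
    intro v hv
    have hadj : ∃ x, T.G.Adj v x := by
      by_contra! hiso
      have hvw : v = w := by
        obtain ⟨p⟩ := hconn v w
        cases p with
        | nil => rfl
        | cons h p => exact absurd h (hiso _)
      subst hvw
      rw [sd_of_isolated hiso] at hw
      simp at hw
    obtain ⟨x, hx⟩ := hadj
    have h := sd_of_not_inner (s := T.sgn) hv hx
    have := hs v
    split_ifs at h
    · exact h
    · exact absurd h this
  by_cases hI : (inner T.G).Nonempty
  · let t : inner T.G → ℤ := fun v => if sd T.G T.sgn v ∈ A then sd T.G T.sgn v else 1
    obtain ⟨T', hT', hd⟩ := exists_realizes (inner_isTree T.isTree hI) t (fun v => by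
      have := pos_le_sd_add hs v
      simp only [t]
      split_ifs <;> omega) (by
      by_cases hwI : w ∈ inner T.G
      · exact ⟨⟨w, hwI⟩, Or.inl (by simp [t, hw])⟩
      · obtain ⟨x, hx, hwx⟩ := exists_inner_adj hconn hI hwI
        refine ⟨⟨x, hx⟩, ?_⟩
        have h := pos_le_sd_add hs ⟨x, hx⟩
        have hpos : 0 < {y | T.G.Adj x y ∧ T.sgn s(x, y) = true}.ncard := by
          refine (Set.ncard_pos (Set.toFinite _)).2 ⟨w, hwx.symm, ?_⟩
          have h := sd_of_not_inner (s := T.sgn) hwI hwx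
          rw [hw] at h
          rw [Sym2.eq_swap]
          by_contra hne
          simp [hne] at h
        simp only [t]
        split_ifs
        · right; simp only at h; omega
        · exact Or.inl rfl)
    refine ⟨T', ?_, hd.trans (inner_diam_add_two_le T.isTree hI)⟩
    convert hT' using 1
    ext a
    constructor
    · intro ha
      obtain ⟨v, rfl⟩ : a ∈ Set.range (sd T.G T.sgn) := hB ▸ hAB ha
      by_cases hv : v ∈ inner T.G
      · exact Or.inr ⟨⟨v, hv⟩, if_pos ha⟩
      · exact Or.inl (hout v hv)
    · rintro (rfl | ⟨v, rfl⟩)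
      · exact h1
      · simp only [t]
        split_ifs with h
        · exact h
        · exact h1
  · -- Without inner vertices `B = {1}`, so `A = B`.
    have hBA : B ⊆ A := by
      rw [hB]
      rintro _ ⟨v, rfl⟩
      rw [hout v fun hv => hI ⟨v, hv⟩]
      exact h1
    exact ⟨T, hAB.antisymm hBA ▸ hT, le_rfl⟩

end SignedTreeDiam

/-- If `A ⊆ B`, `1 ∈ A` and `-1 ∉ B`, then `diam(A) ≤ diam(B)`. -/
theorem stmt_5 (A B : Set ℤ) (hA : A.Finite) (hB : B.Finite) (hAB : A ⊆ B)
    (h1 : (1 : ℤ) ∈ A) (hm1 : (-1 : ℤ) ∉ B) :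
    diamOfSet A ≤ diamOfSet B := by
  obtain ⟨T₀, hT₀⟩ := SignedTreeDiam.exists_tree_realizes hB (hAB h1)
  -- Realizability of `B` rules out the junk value `sInf ∅ = 0`.
  obtain ⟨T, hT, hd⟩ := Nat.sInf_mem
    (s := {k : ℕ | ∃ T : SignedTree, T.Realizes B ∧ T.G.diam = k}) ⟨_, T₀, hT₀, rfl⟩
  obtain ⟨T', hT', hle⟩ := SignedTreeDiam.exists_realizes_subset hAB h1 hm1 T hT
  calc diamOfSet A ≤ T'.G.diam := Nat.sInf_le ⟨T', hT', rfl⟩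
    _ ≤ T.G.diam := hle
    _ = diamOfSet B := hd
end

section
/- Let Z = {z_1, ..., z_n} be a nonempty finite set of n distinct integers, none of which equals 1 or −1, and let D = {1, −1} ∪ Z. Then diam(D) = 2 if n = 1, diam(D) = 3 if n = 2, and diam(D) = 4 if n > 2. -/
/-! ### Signed degrees as sums, and transport to `Fin n` -/

open Classical in
/-- The signed degree of `v` in the graph `G` with edge signs `sgn`, as a sum of signs over the
neighbours of `v`. -/
noncomputable def sdegSum {V : Type} [Fintype V] (G : SimpleGraph V) (sgn : Sym2 V → Bool)
    (v : V) : ℤ :=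
  ∑ w, if G.Adj v w then (if sgn s(v, w) = true then 1 else -1) else 0

lemma sdeg_eq_sdegSum (T : SignedTree) (v : Fin T.n) : T.sdeg v = sdegSum T.G T.sgn v := by
  classical
  let := T.adjDec
  have h : sdegSum T.G T.sgn v = ∑ w, ((if T.G.Adj v w ∧ T.sgn s(v, w) = true then 1 else 0)
      - (if T.G.Adj v w ∧ T.sgn s(v, w) = false then 1 else 0)) := by
    unfold sdegSum
    refine Finset.sum_congr rfl fun w _ => ?_
    by_cases h1 : T.G.Adj v w <;> cases h2 : T.sgn s(v, w) <;> simp [h1]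
  rw [h, Finset.sum_sub_distrib, Finset.sum_boole, Finset.sum_boole]
  unfold SignedTree.sdeg
  congr 3 <;> (ext w; simp)

/-- A signed tree on an arbitrary finite vertex type is isomorphic to a `SignedTree`; the diameter
is only recorded through an upper bound for the distances. -/
lemma exists_signedTree {V : Type} [Fintype V] (G : SimpleGraph V) (hG : G.IsTree)
    (sgn : Sym2 V → Bool) (k : ℕ) (hk : ∀ u v, G.dist u v ≤ k) :
    ∃ T : SignedTree, T.Realizes (Set.range (sdegSum G sgn)) ∧ T.G.diam ≤ k := by
  classical
  let e := Fintype.equivFin V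
  let i : G.comap e.symm ≃g G := SimpleGraph.Iso.comap e.symm G
  have hT : (G.comap e.symm).IsTree := i.isTree_iff.mpr hG
  let T : SignedTree := ⟨Fintype.card V, G.comap e.symm, Classical.decRel _, hT,
    fun x => sgn (x.map e.symm)⟩
  refine ⟨T, ?_, ?_⟩
  · have h : ∀ v, T.sdeg v = sdegSum G sgn (e.symm v) := by
      intro v
      rw [sdeg_eq_sdegSum]
      unfold sdegSum
      rw [← Equiv.sum_comp e.symm]
      rfl
    unfold SignedTree.Realizes
    rw [show T.sdeg = sdegSum G sgn ∘ e.symm from funext h]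
    exact (e.symm.surjective.range_comp _).symm
  · have : Nonempty (Fin T.n) := hT.connected.nonempty
    obtain ⟨u, v, huv⟩ := T.G.exists_dist_eq_diam
    rw [← huv]
    obtain ⟨p, hp⟩ := hG.connected.exists_walk_length_eq_dist (i u) (i v)
    have h := SimpleGraph.dist_le (p.map i.symm.toHom)
    rw [SimpleGraph.Walk.length_map, hp] at h
    have h2 : T.G.dist u v ≤ G.dist (i u) (i v) := by simpa using h
    exact h2.trans (hk _ _)

/-! ### Lower bound: internal vertices -/

/-- A vertex with at least two neighbours; in a tree with at least two vertices these are exactly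
the vertices that are not leaves. -/
def IsInternal {V : Type} (G : SimpleGraph V) (v : V) : Prop :=
  ∃ a b, a ≠ b ∧ G.Adj v a ∧ G.Adj v b

/-- In a tree, at most one neighbour of `v` is closer to `u` than `v` is: shortest paths through
two such neighbours would be two distinct paths from `u` to `v`. -/
lemma exists_farther {V : Type} {G : SimpleGraph V} (hG : G.IsTree) (u : V) {v : V}
    (hv : IsInternal G v) : ∃ w, G.Adj v w ∧ G.dist u w = G.dist u v + 1 := by
  obtain ⟨a, b, hab, ha, hb⟩ := hv
  rcases hG.dist_eq_dist_add_one_of_adj u ha with h1 | h1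
  · rcases hG.dist_eq_dist_add_one_of_adj u hb with h2 | h2
    · exfalso
      obtain ⟨p, hp⟩ := hG.connected.exists_walk_length_eq_dist u a
      obtain ⟨q, hq⟩ := hG.connected.exists_walk_length_eq_dist u b
      have hp' := (p.concat ha.symm).isPath_of_length_eq_dist (by simp [hp, h1])
      have hq' := (q.concat hb.symm).isPath_of_length_eq_dist (by simp [hq, h2])
      have h := congrArg SimpleGraph.Walk.penultimate
        ((hG.existsUnique_path u v).unique hp' hq')
      simp at h
      exact hab h
    · exact ⟨b, hb, h2⟩
  · exact ⟨a, ha, h1⟩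

lemma dist_add_two_le_diam {V : Type} [Finite V] {G : SimpleGraph V} (hG : G.IsTree) {u v : V}
    (hu : IsInternal G u) (hv : IsInternal G v) : G.dist u v + 2 ≤ G.diam := by
  have : Nonempty V := ⟨u⟩
  obtain ⟨w, -, hw⟩ := exists_farther hG v hu
  obtain ⟨x, -, hx⟩ := exists_farther hG w hv
  have h := SimpleGraph.dist_le_diam (SimpleGraph.connected_iff_ediam_ne_top.mp hG.connected)
    (u := w) (v := x)
  rw [SimpleGraph.dist_comm] at hw hx
  rw [SimpleGraph.dist_comm (u := v)] at hw
  rw [SimpleGraph.dist_comm (u := x)] at hx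
  omega

lemma isInternal_of_sdegSum {V : Type} [Fintype V] [Nontrivial V] {G : SimpleGraph V}
    (hG : G.IsTree) (sgn : Sym2 V → Bool) (v : V) (h1 : sdegSum G sgn v ≠ 1)
    (h2 : sdegSum G sgn v ≠ -1) : IsInternal G v := by
  classical
  by_contra hint
  obtain ⟨w, hw⟩ := hG.connected.preconnected.exists_adj_of_nontrivial v
  have h : sdegSum G sgn v = if sgn s(v, w) = true then 1 else -1 := by
    unfold sdegSum
    rw [Finset.sum_eq_single w]
    · simp [hw]
    · intro b _ hb
      rw [if_neg fun hvb => hint ⟨b, w, hb, hvb, hw⟩]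
    · simp
  rw [h] at h1 h2
  split_ifs at h1 h2 <;> simp_all

lemma le_diam (Z : Finset ℤ) (hne : Z.Nonempty) (hz : ∀ z ∈ Z, z ≠ 1 ∧ z ≠ -1) (T : SignedTree)
    (hT : T.Realizes (insert 1 (insert (-1) (↑Z : Set ℤ)))) :
    2 + min (Z.card - 1) 2 ≤ T.G.diam := by
  classical
  unfold SignedTree.Realizes at hT
  obtain ⟨a, ha⟩ : (1 : ℤ) ∈ Set.range T.sdeg := hT ▸ by simp
  obtain ⟨b, hb⟩ : (-1 : ℤ) ∈ Set.range T.sdeg := hT ▸ by simp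
  have : Nontrivial (Fin T.n) := ⟨a, b, fun h => by rw [h, hb] at ha; norm_num at ha⟩
  have hint : ∀ z ∈ Z, ∃ v, T.sdeg v = z ∧ IsInternal T.G v := by
    intro z hzZ
    obtain ⟨v, hv⟩ : z ∈ Set.range T.sdeg := hT ▸ by simp [hzZ]
    have hv' := sdeg_eq_sdegSum T v
    refine ⟨v, hv, isInternal_of_sdegSum T.isTree T.sgn v ?_ ?_⟩ <;> rw [← hv', hv]
    exacts [(hz z hzZ).1, (hz z hzZ).2]
  choose! f hf hfi using hint
  have hinj : ∀ x ∈ Z, ∀ y ∈ Z, x ≠ y → f x ≠ f y := fun x hx y hy hxy h =>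
    hxy (by rw [← hf x hx, ← hf y hy, h])
  have key : ∀ x ∈ Z, ∀ y ∈ Z, T.G.dist (f x) (f y) + 2 ≤ T.G.diam := fun x hx y hy =>
    dist_add_two_le_diam T.isTree (hfi x hx) (hfi y hy)
  have hpos : ∀ x ∈ Z, ∀ y ∈ Z, x ≠ y → 1 ≤ T.G.dist (f x) (f y) := fun x hx y hy hxy =>
    T.isTree.connected.pos_dist_of_ne (hinj x hx y hy hxy)
  rcases le_or_gt Z.card 2 with h2 | h2
  · rcases le_or_gt Z.card 1 with h1 | h1
    · obtain ⟨x, hx⟩ := hne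
      have := key x hx x hx
      omega
    · obtain ⟨x, hx, y, hy, hxy⟩ := Finset.one_lt_card.mp h1
      have := key x hx y hy
      have := hpos x hx y hy hxy
      omega
  · obtain ⟨x, hx, y, hy, z, hz, hxy, hxz, hyz⟩ := Finset.two_lt_card.mp h2
    have := key x hx y hy
    have := key x hx z hz
    have := key y hy z hz
    have := hpos x hx y hy hxy
    have := hpos x hx z hz hxz
    have := hpos y hy z hz hyz
    by_contra hlt
    have e1 : T.G.dist (f x) (f y) = 1 := by omega
    have e2 : T.G.dist (f x) (f z) = 1 := by omega
    have e3 : T.G.dist (f y) (f z) = 1 := by omega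
    rw [SimpleGraph.dist_eq_one_iff_adj] at e1 e2 e3
    exact T.isTree.isAcyclic.cliqueFree le_rfl {f x, f y, f z}
      (SimpleGraph.is3Clique_triple_iff.mpr ⟨e1, e2, e3⟩)

/-! ### Upper bound: hanging leaves on a star -/

/-- The graph obtained from `H` by hanging, for each `l : L`, a new leaf `l` at the vertex `π l`. -/
def leafGraph {C L : Type} (H : SimpleGraph C) (π : L → C) : SimpleGraph (C ⊕ L) where
  Adj x y := match x, y with
    | .inl a, .inl b => H.Adj a b
    | .inl a, .inr l => π l = a
    | .inr l, .inl a => π l = a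
    | .inr _, .inr _ => False
  symm := ⟨by
    rintro (a | l) (b | m) h
    · exact H.adj_symm h
    · exact h
    · exact h
    · exact h⟩
  loopless := ⟨by
    rintro (a | l) h
    · exact H.loopless.irrefl a h
    · exact h⟩

section leafGraph

variable {C L : Type} {H : SimpleGraph C} {π : L → C}

@[simp] lemma leafGraph_inl_inl {a b : C} :
    (leafGraph H π).Adj (.inl a) (.inl b) ↔ H.Adj a b := Iff.rfl

@[simp] lemma leafGraph_inl_inr {a : C} {l : L} :
    (leafGraph H π).Adj (.inl a) (.inr l) ↔ π l = a := Iff.rfl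

@[simp] lemma leafGraph_inr_inl {a : C} {l : L} :
    (leafGraph H π).Adj (.inr l) (.inl a) ↔ π l = a := Iff.rfl

@[simp] lemma leafGraph_inr_inr {l m : L} :
    ¬ (leafGraph H π).Adj (.inr l) (.inr m) := id

/-- The inclusion of the core `H`. -/
def leafGraphHom (H : SimpleGraph C) (π : L → C) : H →g leafGraph H π := ⟨Sum.inl, id⟩

lemma leafGraph_exists_walk (hH : H.Connected) (k : ℕ) (hk : ∀ a b, H.dist a b ≤ k)
    (x y : C ⊕ L) : ∃ p : (leafGraph H π).Walk x y, p.length ≤ k + 2 := by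
  have h1 : ∀ x : C ⊕ L, ∃ (a : C) (p : (leafGraph H π).Walk x (.inl a)), p.length ≤ 1 := by
    rintro (a | l)
    · exact ⟨a, .nil, by simp⟩
    · exact ⟨π l, .cons (leafGraph_inr_inl.mpr rfl) .nil, by simp⟩
  obtain ⟨a, p, hp⟩ := h1 x
  obtain ⟨b, q, hq⟩ := h1 y
  obtain ⟨r, hr⟩ := hH.exists_walk_length_eq_dist a b
  have := hk a b
  obtain ⟨r', hr'⟩ : ∃ r' : (leafGraph H π).Walk (.inl a) (.inl b), r'.length = r.length :=
    ⟨r.map (leafGraphHom H π), SimpleGraph.Walk.length_map _ _⟩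
  refine ⟨(p.append r').append q.reverse, ?_⟩
  rw [SimpleGraph.Walk.length_append, SimpleGraph.Walk.length_append,
    SimpleGraph.Walk.length_reverse]
  omega

lemma leafGraph_connected [Finite C] (hH : H.Connected) : (leafGraph H π).Connected := by
  have := hH.nonempty
  have : Nonempty (C ⊕ L) := ⟨.inl (Classical.arbitrary C)⟩
  have hk : ∀ a b, H.dist a b ≤ H.diam := fun _ _ =>
    SimpleGraph.dist_le_diam (SimpleGraph.connected_iff_ediam_ne_top.mp hH)
  exact ⟨fun x y => (leafGraph_exists_walk hH _ hk x y).choose.reachable⟩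

/-- Hanging leaves on a tree gives a tree: connectedness is kept, and each new vertex comes with
just one new edge. -/
lemma leafGraph_isTree [Finite C] [Finite L] (hH : H.IsTree) : (leafGraph H π).IsTree := by
  have hconn := leafGraph_connected (π := π) hH.connected
  refine SimpleGraph.isTree_iff_connected_and_card.mpr
    ⟨hconn, le_antisymm ?_ hconn.card_vert_le_card_edgeSet_add_one⟩
  have hc := (SimpleGraph.isTree_iff_connected_and_card.mp hH).2
  let g : H.edgeSet ⊕ L → Sym2 (C ⊕ L) :=
    Sum.elim (fun e => e.1.map Sum.inl) (fun l => s(.inl (π l), .inr l))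
  have hsub : (leafGraph H π).edgeSet ⊆ Set.range g := by
    intro e
    induction e using Sym2.ind with
    | _ x y =>
      intro h
      rw [SimpleGraph.mem_edgeSet] at h
      rcases x with a | l <;> rcases y with b | m
      · exact ⟨.inl ⟨s(a, b), h⟩, rfl⟩
      · exact ⟨.inr m, by rw [leafGraph_inl_inr] at h; simp [g, h]⟩
      · exact ⟨.inr l, by rw [leafGraph_inr_inl] at h; simp [g, h, Sym2.eq_swap]⟩
      · exact absurd h leafGraph_inr_inr
  have h1 : Nat.card (leafGraph H π).edgeSet ≤ Nat.card (Set.range g) :=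
    Nat.card_mono (Set.toFinite _) hsub
  have h2 : Nat.card (Set.range g) ≤ Nat.card (H.edgeSet ⊕ L) := Finite.card_range_le g
  rw [Nat.card_sum] at h2 ⊢
  omega

end leafGraph

open Classical in
/-- Signs on `leafGraph H π`: the edge at the leaf `l` gets the sign `σ l`, and the edges of `H` are
positive. -/
noncomputable def leafSgn {C L : Type} (σ : L → Bool) (e : Sym2 (C ⊕ L)) : Bool :=
  !decide (∃ l, Sum.inr l ∈ e ∧ σ l = false)

/-- Any function `f` on a finite tree `H` is the restriction of the signed degree of a signed tree
obtained by hanging leaves on `H`, with leaves of both signs present. -/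
lemma exists_signedTree_of_tree {C : Type} [Fintype C] (H : SimpleGraph C) (hH : H.IsTree)
    (f : C → ℤ) (k : ℕ) (hk : ∀ a b, H.dist a b ≤ k) :
    ∃ T : SignedTree, T.Realizes (insert 1 (insert (-1) (Set.range f))) ∧ T.G.diam ≤ k + 2 := by
  classical
  have := hH.connected.nonempty
  -- `p c` positive and `q c` negative leaves at `c`, so that `H.degree c + p c - q c = f c`
  let d : C → ℤ := fun c => ∑ b, if H.Adj c b then 1 else 0
  let p : C → ℕ := fun c => 1 + (f c - d c).toNat
  let q : C → ℕ := fun c => 1 + (d c - f c).toNat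
  let L := Σ c : C, Fin (p c) ⊕ Fin (q c)
  let π : L → C := Sigma.fst
  let σ : L → Bool := fun l => l.2.isLeft
  have hinl : ∀ c, sdegSum (leafGraph H π) (leafSgn σ) (.inl c) = f c := by
    intro c
    have h : sdegSum (leafGraph H π) (leafSgn σ) (.inl c) = d c + (p c - q c) := by
      unfold sdegSum
      rw [Fintype.sum_sum_type]
      congr 1
      · simp [leafSgn, d]
      · rw [Fintype.sum_sigma, Finset.sum_eq_single c]
        · simp [leafSgn, π, σ]; ring
        · intro b _ hb
          simp [π, hb]
        · simp
    rw [h]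
    simp only [p, q]
    push_cast
    omega
  have hinr : ∀ l, sdegSum (leafGraph H π) (leafSgn σ) (.inr l) = if σ l = true then 1 else -1 := by
    intro l
    unfold sdegSum
    rw [Fintype.sum_sum_type]
    simp [leafSgn]
  have hdist : ∀ x y, (leafGraph H π).dist x y ≤ k + 2 := fun x y => by
    obtain ⟨w, hw⟩ := leafGraph_exists_walk (π := π) hH.connected k hk x y
    exact (SimpleGraph.dist_le w).trans hw
  obtain ⟨T, hT, hTd⟩ := exists_signedTree (leafGraph H π) (leafGraph_isTree hH) (leafSgn σ) _ hdist
  refine ⟨T, ?_, hTd⟩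
  convert hT using 1
  ext z
  simp only [Set.mem_insert_iff, Set.mem_range]
  constructor
  · have c := Classical.arbitrary C
    rintro (rfl | rfl | ⟨c, rfl⟩)
    · exact ⟨.inr ⟨c, .inl ⟨0, by simp [p]⟩⟩, by rw [hinr]; simp [σ]⟩
    · exact ⟨.inr ⟨c, .inr ⟨0, by simp [q]⟩⟩, by rw [hinr]; simp [σ]⟩
    · exact ⟨.inl c, hinl c⟩
  · rintro ⟨c | l, rfl⟩
    · exact .inr (.inr ⟨c, (hinl c).symm⟩)
    · rw [hinr]
      split_ifs <;> simp

lemma starGraph_dist_le {C : Type} [Fintype C] (r a b : C) :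
    (SimpleGraph.starGraph r).dist a b ≤ min (Fintype.card C - 1) 2 := by
  classical
  have hr : ∀ a, (SimpleGraph.starGraph r).dist a r ≤ 1 := by
    intro a
    by_cases h : r = a
    · simp [h]
    · exact (SimpleGraph.dist_eq_one_iff_adj.mpr (SimpleGraph.starGraph_center_adj' h)).le
  refine le_min ?_ ?_
  · obtain ⟨p, hp, hl⟩ := (SimpleGraph.connected_starGraph r).exists_path_of_dist a b
    have := hp.length_lt
    omega
  · have h1 := hr a
    have h2 := hr b
    have h3 := (SimpleGraph.connected_starGraph r).dist_triangle (u := a) (v := r) (w := b)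
    rw [SimpleGraph.dist_comm (u := r)] at h3
    omega

lemma diamOfSet_eq_s10 (Z : Finset ℤ) (hne : Z.Nonempty) (hz : ∀ z ∈ Z, z ≠ 1 ∧ z ≠ -1) :
    diamOfSet (insert 1 (insert (-1) (↑Z : Set ℤ))) = 2 + min (Z.card - 1) 2 := by
  obtain ⟨r, hr⟩ := hne
  obtain ⟨T, hT, hTd⟩ := exists_signedTree_of_tree (SimpleGraph.starGraph (⟨r, hr⟩ : Z))
    (SimpleGraph.isTree_starGraph _) Subtype.val _ (starGraph_dist_le _)
  have hrange : Set.range (Subtype.val : Z → ℤ) = (↑Z : Set ℤ) := Subtype.range_coe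
  rw [hrange] at hT
  rw [Fintype.card_coe] at hTd
  have hle : diamOfSet (insert 1 (insert (-1) (↑Z : Set ℤ))) ≤ T.G.diam := Nat.sInf_le ⟨T, hT, rfl⟩
  refine le_antisymm (hle.trans (by omega)) ?_
  refine le_csInf ⟨_, T, hT, rfl⟩ ?_
  rintro k ⟨S, hS, rfl⟩
  exact le_diam Z ⟨r, hr⟩ hz S hS

/-- For `D = {1, -1} ∪ Z` with `Z` a nonempty set of `n` distinct integers
none equal to `1` or `-1`: `diam(D) = 2` if `n = 1`, `3` if `n = 2`, and `4` if `n > 2`. -/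
theorem stmt_10 (n : ℕ) (Z : Finset ℤ) (hcard : Z.card = n) (hne : Z.Nonempty)
    (hz : ∀ z ∈ Z, z ≠ 1 ∧ z ≠ -1) (D : Set ℤ)
    (hD : D = insert 1 (insert (-1) (↑Z : Set ℤ))) :
    (n = 1 → diamOfSet D = 2) ∧ (n = 2 → diamOfSet D = 3) ∧ (2 < n → diamOfSet D = 4) := by
  subst hD
  rw [diamOfSet_eq_s10 Z hne hz]
  omega
end

section
/- Let X = {x_1, ..., x_n} be a nonempty finite set of n distinct integers, each greater than 1, and let D = {1, 0} ∪ X. Then σ(D) = 4 − n + (x_1 + x_2 + ... + x_n). -/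
open Finset

namespace SignedTree

/-! ### Signed degrees as sums -/

/-- The value `1` or `-1` of a sign. -/
def sv (b : Bool) : ℤ := if b then 1 else -1

open Classical in
lemma sdeg_eq_sum (T : SignedTree) (v : Fin T.n) :
    T.sdeg v = ∑ w, if T.G.Adj v w then sv (T.sgn s(v, w)) else 0 := by
  let := T.adjDec
  have h : T.sdeg v = ((((T.G.neighborFinset v).filter fun w => T.sgn s(v, w) = true).card : ℤ)) -
    ((((T.G.neighborFinset v).filter fun w => T.sgn s(v, w) = false).card : ℤ)) := rfl
  rw [h, SimpleGraph.neighborFinset_eq_filter, filter_filter, filter_filter, card_filter,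
    card_filter]
  push_cast
  rw [← sum_sub_distrib]
  refine sum_congr rfl fun w _ => ?_
  by_cases hw : T.G.Adj v w <;> cases hs : T.sgn s(v, w) <;> simp [hw, sv]

/-! ### Hanging a leaf on a vertex -/

/-- The graph obtained from `G` by joining a new last vertex to `v`. -/
def leafGraph {n : ℕ} (G : SimpleGraph (Fin n)) (v : Fin n) : SimpleGraph (Fin (n + 1)) :=
  G.map Fin.castSuccEmb ⊔ SimpleGraph.edge v.castSucc (Fin.last n)

section leafGraph

variable {n : ℕ} {G : SimpleGraph (Fin n)} {v : Fin n}

lemma not_map_adj_last (a : Fin (n + 1)) :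
    ¬ (G.map Fin.castSuccEmb).Adj a (Fin.last n) := by
  rw [SimpleGraph.map_adj]
  rintro ⟨x, y, -, -, h⟩
  exact Fin.castSucc_ne_last y h

lemma leafGraph_adj_castSucc (a b : Fin n) :
    (leafGraph G v).Adj a.castSucc b.castSucc ↔ G.Adj a b := by
  have h : (G.map Fin.castSuccEmb).Adj a.castSucc b.castSucc ↔ G.Adj a b :=
    SimpleGraph.map_adj_apply (f := Fin.castSuccEmb)
  simp [leafGraph, SimpleGraph.edge_adj, -Fin.coe_castSuccEmb, h, Fin.castSucc_ne_last]

lemma leafGraph_adj_castSucc_last (a : Fin n) :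
    (leafGraph G v).Adj a.castSucc (Fin.last n) ↔ a = v := by
  have h := not_map_adj_last (G := G) a.castSucc
  simp [leafGraph, SimpleGraph.edge_adj, -Fin.coe_castSuccEmb, -SimpleGraph.map_adj, h,
    Fin.castSucc_ne_last]

lemma leafGraph_adj_last_castSucc (a : Fin n) :
    (leafGraph G v).Adj (Fin.last n) a.castSucc ↔ a = v := by
  rw [SimpleGraph.adj_comm, leafGraph_adj_castSucc_last]

lemma leafGraph_isTree (hG : G.IsTree) : (leafGraph G v).IsTree := by
  classical
  rw [SimpleGraph.isTree_iff_connected_and_card]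
  constructor
  · have key : ∀ a, (leafGraph G v).Reachable v.castSucc a := by
      intro a
      induction a using Fin.lastCases with
      | last => exact ((leafGraph_adj_castSucc_last v).2 rfl).reachable
      | cast a =>
        exact (hG.connected.preconnected v a).map
          ⟨Fin.castSucc, fun {a b} h => (leafGraph_adj_castSucc a b).2 h⟩
    exact ⟨fun a b => (key a).symm.trans (key b)⟩
  · have h := SimpleGraph.card_edgeFinset_sup_edge (G.map Fin.castSuccEmb)
      (not_map_adj_last v.castSucc) (Fin.castSucc_ne_last v)
    have h1 : #(G.map Fin.castSuccEmb).edgeFinset = #G.edgeFinset := by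
      convert! SimpleGraph.card_edgeFinset_map Fin.castSuccEmb G
    have h2 := hG.card_edgeFinset
    rw [Fintype.card_fin] at h2
    rw [Nat.card_eq_fintype_card, ← SimpleGraph.edgeFinset_card, Nat.card_eq_fintype_card,
      Fintype.card_fin]
    have h3 : #(leafGraph G v).edgeFinset = #G.edgeFinset + 1 := by
      rw [← h1, ← h]
      congr!
    omega

end leafGraph

open Classical in
/-- The signed tree obtained from `T` by hanging a new leaf on `v` with an edge of sign `b`. A pair
that does not come from `T` also gets the sign `b`. -/
noncomputable abbrev addLeaf (T : SignedTree) (v : Fin T.n) (b : Bool) : SignedTree where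
  n := T.n + 1
  G := leafGraph T.G v
  adjDec := Classical.decRel _
  isTree := leafGraph_isTree T.isTree
  sgn e := if ∃ e', Sym2.map Fin.castSucc e' = e ∧ T.sgn e' = !b then !b else b

lemma addLeaf_sgn_castSucc (T : SignedTree) (v x y : Fin T.n) (b : Bool) :
    (T.addLeaf v b).sgn s(x.castSucc, y.castSucc) = T.sgn s(x, y) := by
  have h : (∃ e', Sym2.map Fin.castSucc e' = s(x.castSucc, y.castSucc) ∧ T.sgn e' = !b) ↔
      T.sgn s(x, y) = !b := by
    constructor
    · rintro ⟨e', he, hs⟩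
      rw [← Sym2.map_mk] at he
      rwa [← Sym2.map.injective (Fin.castSucc_injective _) he]
    · intro hs
      exact ⟨s(x, y), rfl, hs⟩
  simp only [addLeaf, h]
  cases b <;> cases T.sgn s(x, y) <;> rfl

lemma addLeaf_sgn_last (T : SignedTree) (v x : Fin T.n) (b : Bool) :
    (T.addLeaf v b).sgn s(x.castSucc, Fin.last T.n) = b := by
  have h : ¬ ∃ e', Sym2.map Fin.castSucc e' = s(x.castSucc, Fin.last T.n) ∧ T.sgn e' = !b := by
    rintro ⟨e', he, -⟩
    have : Fin.last T.n ∈ Sym2.map Fin.castSucc e' := by rw [he]; simp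
    obtain ⟨a, -, ha⟩ := Sym2.mem_map.1 this
    exact Fin.castSucc_ne_last a ha
  simp only [addLeaf, h, if_false]

lemma addLeaf_sdeg_castSucc (T : SignedTree) (v x : Fin T.n) (b : Bool) :
    (T.addLeaf v b).sdeg x.castSucc = T.sdeg x + if x = v then sv b else 0 := by
  classical
  rw [sdeg_eq_sum, sdeg_eq_sum]
  refine (Fin.sum_univ_castSucc (n := T.n) _).trans ?_
  congr 1
  · refine sum_congr rfl fun y _ => ?_
    rw [addLeaf_sgn_castSucc]
    exact if_congr (leafGraph_adj_castSucc _ _) rfl rfl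
  · rw [addLeaf_sgn_last]
    exact if_congr (leafGraph_adj_castSucc_last _) rfl rfl

lemma addLeaf_sdeg_last (T : SignedTree) (v : Fin T.n) (b : Bool) :
    (T.addLeaf v b).sdeg (Fin.last T.n) = sv b := by
  classical
  rw [sdeg_eq_sum]
  refine (Fin.sum_univ_castSucc (n := T.n) _).trans ?_
  rw [if_neg (SimpleGraph.irrefl _), add_zero]
  have h : ∀ y : Fin T.n, (if (T.addLeaf v b).G.Adj (Fin.last T.n) y.castSucc then
      sv ((T.addLeaf v b).sgn s(Fin.last T.n, y.castSucc)) else 0) = if y = v then sv b else 0 := by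
    intro y
    rw [Sym2.eq_swap, addLeaf_sgn_last]
    exact if_congr (leafGraph_adj_last_castSucc _) rfl rfl
  exact (sum_congr rfl fun y _ => h y).trans (by simp)

/-! ### Realizable degree multisets and the upper bound -/

/-- `M` is the multiset of signed degrees, with multiplicity, of some signed tree. -/
def HasDegrees (M : Multiset ℤ) : Prop :=
  ∃ T : SignedTree, (univ : Finset (Fin T.n)).val.map T.sdeg = M

lemma HasDegrees.singleton_zero : HasDegrees {0} := by
  classical
  refine ⟨⟨1, ⊥, inferInstance, SimpleGraph.IsTree.of_subsingleton, fun _ => true⟩, ?_⟩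
  have : ∀ T : SignedTree, T.G = ⊥ → ∀ v, T.sdeg v = 0 := by
    intro T hT v
    simp [sdeg_eq_sum, hT]
  rw [Multiset.map_congr rfl fun v _ => this _ rfl v]
  rfl

lemma HasDegrees.addLeaf {a : ℤ} {M : Multiset ℤ} (h : HasDegrees (a ::ₘ M)) (b : Bool) :
    HasDegrees ((a + sv b) ::ₘ sv b ::ₘ M) := by
  classical
  obtain ⟨T, hT⟩ := h
  have ha : a ∈ (univ : Finset (Fin T.n)).val.map T.sdeg := by simp [hT]
  obtain ⟨v, -, rfl⟩ := Multiset.mem_map.1 ha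
  refine ⟨T.addLeaf v b, ?_⟩
  have huniv : (univ : Finset (Fin T.n)).val = v ::ₘ (univ.erase v).val := by
    rw [erase_val, Multiset.cons_erase (mem_univ_val v)]
  rw [huniv, Multiset.map_cons, Multiset.cons_inj_right] at hT
  have h1 : (univ : Finset (Fin (T.n + 1))).val =
      Fin.last T.n ::ₘ (univ : Finset (Fin T.n)).val.map Fin.castSucc := by
    rw [Fin.univ_castSuccEmb]; rfl
  have h2 : (univ : Finset (Fin (T.addLeaf v b).n)).val.map (T.addLeaf v b).sdeg =
      (Fin.last T.n ::ₘ (univ : Finset (Fin T.n)).val.map Fin.castSucc).map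
        (T.addLeaf v b).sdeg := congrArg _ h1
  rw [h2, huniv, Multiset.map_cons, Multiset.map_map, Multiset.map_cons, addLeaf_sdeg_last,
    Multiset.cons_swap]
  congr 1
  · simp [addLeaf_sdeg_castSucc]
  · congr 1
    rw [← hT]
    refine Multiset.map_congr rfl fun x hx => ?_
    have hxv : x ≠ v := ne_of_mem_erase (s := univ) hx
    simp [addLeaf_sdeg_castSucc, hxv]

/-- The path with signs `+, -, +`. -/
lemma HasDegrees.path : HasDegrees {1, 0, 0, 1} := by
  have h1 : HasDegrees {1, 1} := by simpa [sv] using HasDegrees.singleton_zero.addLeaf true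
  have h2 : HasDegrees {0, -1, 1} := by simpa [sv] using HasDegrees.addLeaf h1 false
  have h3 : HasDegrees (-1 ::ₘ {0, 1}) := by
    rwa [Multiset.insert_eq_cons, Multiset.insert_eq_cons, Multiset.cons_swap] at h2
  have h4 : HasDegrees (0 ::ₘ 1 ::ₘ {0, 1}) := by simpa [sv] using h3.addLeaf true
  rwa [Multiset.cons_swap] at h4

/-- Hanging `k` positive leaves on a vertex of signed degree `1`. -/
lemma HasDegrees.addLeaves {M : Multiset ℤ} (h : HasDegrees (1 ::ₘ M)) (k : ℕ) :
    HasDegrees ((1 + k : ℤ) ::ₘ (Multiset.replicate k 1 + M)) := by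
  induction k with
  | zero => simpa using h
  | succ k ih =>
    have := ih.addLeaf true
    simp only [sv, if_true] at this
    rw [Multiset.replicate_succ, Multiset.cons_add]
    convert! this using 2

/-- A signed tree on `4 + ∑ (x - 1)` vertices whose set of signed degrees is `{1, 0} ∪ X`. The `1`
is split off from the multiset so that the next element of `X` can be built on it. -/
lemma exists_hasDegrees (X : Finset ℤ) (hx : ∀ x ∈ X, 1 < x) :
    ∃ M : Multiset ℤ, HasDegrees (1 ::ₘ M) ∧ (∀ a, a ∈ 1 ::ₘ M ↔ a = 1 ∨ a = 0 ∨ a ∈ X) ∧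
      (((1 ::ₘ M).card : ℕ) : ℤ) = 4 + ∑ x ∈ X, (x - 1) := by
  induction X using Finset.induction_on with
  | empty =>
    refine ⟨{0, 0, 1}, HasDegrees.path, ?_, by simp⟩
    intro a
    simp
    tauto
  | insert x X hxX ih =>
    obtain ⟨M, hM, hmem, hcard⟩ := ih fun y hy => hx y (mem_insert_of_mem hy)
    have hx1 := hx x (mem_insert_self _ _)
    obtain ⟨k, hk⟩ : ∃ k : ℕ, x = 1 + ((k + 1 : ℕ) : ℤ) := ⟨(x - 2).toNat, by omega⟩
    have h := hM.addLeaves (k + 1)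
    rw [← hk, Multiset.replicate_succ, Multiset.cons_add, Multiset.cons_swap] at h
    refine ⟨_, h, ?_, ?_⟩
    · intro a
      have := hmem a
      simp only [Multiset.mem_cons, Multiset.mem_add, Multiset.mem_replicate,
        Finset.mem_insert] at this ⊢
      tauto
    · rw [sum_insert hxX]
      simp only [Multiset.card_cons, Multiset.card_add, Multiset.card_replicate] at hcard ⊢
      push_cast at hcard hk ⊢
      linarith

/-! ### Negative edges and the lower bound -/

/-- The number of negative edges at `v`. -/
noncomputable def neg (T : SignedTree) (v : Fin T.n) : ℕ :=
  letI := T.adjDec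
  ((T.G.neighborFinset v).filter fun w => T.sgn s(v, w) = false).card

lemma sdeg_add_two_mul_neg (T : SignedTree) (v : Fin T.n) :
    T.sdeg v + 2 * T.neg v = T.deg v := by
  let := T.adjDec
  have h := card_filter_add_card_filter_not (s := T.G.neighborFinset v)
    (fun w => T.sgn s(v, w) = true)
  simp only [Bool.not_eq_true, SimpleGraph.card_neighborFinset_eq_degree] at h
  unfold sdeg neg deg
  push_cast [← h]
  ring

lemma sum_sdeg_add_two_mul_neg (T : SignedTree) :
    ∑ v, (T.sdeg v + 2 * T.neg v) = 2 * ((T.n : ℤ) - 1) := by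
  classical
  let := T.adjDec
  have h1 := T.G.sum_degrees_eq_twice_card_edges
  have h2 := T.isTree.card_edgeFinset
  rw [Fintype.card_fin] at h2
  simp only [sdeg_add_two_mul_neg]
  have h3 : ∑ v, T.deg v = 2 * #T.G.edgeFinset := h1
  rw [← Nat.cast_sum, h3]
  push_cast [← h2]
  ring

lemma neg_pos_iff (T : SignedTree) (v : Fin T.n) :
    0 < T.neg v ↔ ∃ w, T.G.Adj v w ∧ T.sgn s(v, w) = false := by
  let := T.adjDec
  simp [neg, card_pos, Finset.Nonempty]

lemma neg_pos_of_sdeg_eq_zero (T : SignedTree) (hn : 2 ≤ T.n) {v : Fin T.n}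
    (hv : T.sdeg v = 0) : 0 < T.neg v := by
  let := T.adjDec
  have : Nontrivial (Fin T.n) := Fin.nontrivial_iff_two_le.2 hn
  have h : 0 < T.deg v := T.isTree.connected.preconnected.degree_pos_of_nontrivial v
  have := T.sdeg_add_two_mul_neg v
  omega

/-- The lower bound on the order of a signed tree realizing `{1, 0} ∪ X`. -/
lemma four_add_sum_le (T : SignedTree) (X : Finset ℤ) (hx : ∀ x ∈ X, 1 < x)
    (h : T.Realizes (insert 1 (insert 0 (↑X : Set ℤ)))) :
    4 + ∑ x ∈ X, (x - 1) ≤ (T.n : ℤ) := by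
  classical
  have hmem : ∀ a, a ∈ Set.range T.sdeg ↔ a = 1 ∨ a = 0 ∨ a ∈ X := by
    intro a
    rw [← h]
    simp
  obtain ⟨z, hz⟩ := (hmem 0).2 (by simp)
  obtain ⟨u, hu⟩ := (hmem 1).2 (by simp)
  have huz : u ≠ z := by rintro rfl; omega
  have hn : 2 ≤ T.n := by
    have := u.2; have := z.2
    have : u.1 ≠ z.1 := fun e => huz (Fin.ext e)
    omega
  have hnonneg : ∀ v, 0 ≤ T.sdeg v - 1 + T.neg v := by
    intro v
    rcases (hmem _).1 ⟨v, rfl⟩ with h1 | h0 | hX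
    · omega
    · have := T.neg_pos_of_sdeg_eq_zero hn h0
      omega
    · have := hx _ hX
      omega
  have hneg : 2 ≤ ∑ v, T.neg v := by
    have hz0 := T.neg_pos_of_sdeg_eq_zero hn hz
    obtain ⟨w, hw, hs⟩ := (T.neg_pos_iff z).1 hz0
    have hw0 : 0 < T.neg w := (T.neg_pos_iff w).2 ⟨z, hw.symm, by rwa [Sym2.eq_swap]⟩
    have := sum_le_sum_of_subset (f := T.neg) (subset_univ {z, w})
    rw [sum_pair hw.ne] at this
    omega
  have hX : ∑ x ∈ X, (x - 1) ≤ ∑ v, (T.sdeg v - 1 + T.neg v) := by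
    have : Nonempty (Fin T.n) := ⟨z⟩
    choose! f hf using fun x (hx : x ∈ X) => (hmem x).2 (Or.inr (Or.inr hx))
    have hinj : Set.InjOn f X := fun a ha b hb hab => by rw [← hf a ha, ← hf b hb, hab]
    calc ∑ x ∈ X, (x - 1) ≤ ∑ x ∈ X, (T.sdeg (f x) - 1 + T.neg (f x)) := by
          refine sum_le_sum fun x hx => ?_
          rw [hf x hx]
          omega
      _ = ∑ v ∈ X.image f, (T.sdeg v - 1 + T.neg v) :=
          (sum_image (f := fun v => T.sdeg v - 1 + (T.neg v : ℤ)) hinj).symm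
      _ ≤ _ := sum_le_sum_of_subset_of_nonneg (subset_univ _) fun v _ _ => hnonneg v
  have hsum := T.sum_sdeg_add_two_mul_neg
  simp only [sum_add_distrib, sum_sub_distrib, ← mul_sum, sum_const, card_univ,
    Fintype.card_fin, nsmul_eq_mul, mul_one] at hsum hX ⊢
  zify at hneg
  linarith

end SignedTree

/-- For `D = {1, 0} ∪ X` with `X` a nonempty set of `n` distinct integers
each greater than 1: `σ(D) = 4 - n + ∑ x ∈ X, x`. -/
theorem stmt_15 (n : ℕ) (X : Finset ℤ) (hcard : X.card = n) (hne : X.Nonempty)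
    (hx : ∀ x ∈ X, 1 < x) (D : Set ℤ) (hD : D = insert 1 (insert 0 (↑X : Set ℤ))) :
    (orderOfSet D : ℤ) = 4 - (n : ℤ) + ∑ x ∈ X, x := by
  subst hD hcard
  obtain ⟨M, ⟨T, hT⟩, hmem, hc⟩ := SignedTree.exists_hasDegrees X hx
  have hTn : T.n = (1 ::ₘ M).card := by simp [← hT]
  have hR : T.Realizes (insert 1 (insert 0 (↑X : Set ℤ))) := by
    ext a
    have := hmem a
    rw [← hT] at this
    simpa using this.symm
  rw [← hTn] at hc
  have hsum : ∑ x ∈ X, (x - 1) = ∑ x ∈ X, x - (X.card : ℤ) := by simp [Finset.sum_sub_distrib]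
  have hle : orderOfSet (insert 1 (insert 0 (↑X : Set ℤ))) ≤ T.n := Nat.sInf_le ⟨T, hR, rfl⟩
  have hs : {k : ℕ | ∃ T : SignedTree,
      T.Realizes (insert 1 (insert 0 (↑X : Set ℤ))) ∧ T.n = k}.Nonempty := ⟨T.n, T, hR, rfl⟩
  obtain ⟨T', hR', hT'⟩ := Nat.sInf_mem hs
  have hge := T'.four_add_sum_le X hx hR'
  have hT'' : T'.n = orderOfSet (insert 1 (insert 0 (↑X : Set ℤ))) := hT'
  omega
end
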